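/- Let n ≥ 2 and let φ be an n-qubit stabilizer state, written as φ = |0⟩⊗φ₀ + |1⟩⊗φ₁ with φ₀, φ₁ ∈ ℂ^(2^(n−1)). If φ₀ ≠ 0 and φ₁ ≠ 0, then √2·φ₀ is an (n−1)-qubit stabilizer state, and there exist λ ∈ {1, −1, i, −i} and an (n−1)-qubit Pauli string P such that φ₁ = λ·Pφ₀. -/

import Mathlib

open Matrix

noncomputable section

/-- The single-qubit Pauli matrices. -/
def pauliI : Matrix (Fin 2) (Fin 2) ℂ := 1
def pauliX : Matrix (Fin 2) (Fin 2) ℂ := !![0, 1; 1, 0]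
def pauliY : Matrix (Fin 2) (Fin 2) ℂ := !![0, -Complex.I; Complex.I, 0]
def pauliZ : Matrix (Fin 2) (Fin 2) ℂ := !![1, 0; 0, -1]

/-- Kronecker product of a `2 × 2` matrix (most significant qubit) with a
`2^m × 2^m` matrix, indexed by `Fin (2^(m+1))`. -/
def kron {m : ℕ} (A : Matrix (Fin 2) (Fin 2) ℂ) (B : Matrix (Fin (2 ^ m)) (Fin (2 ^ m)) ℂ) :
    Matrix (Fin (2 ^ (m + 1))) (Fin (2 ^ (m + 1))) ℂ := fun i j =>
  A (if (i : ℕ) < 2 ^ m then 0 else 1) (if (j : ℕ) < 2 ^ m then 0 else 1) *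
    B ⟨(i : ℕ) % 2 ^ m, Nat.mod_lt _ (pow_pos (by norm_num) m)⟩
      ⟨(j : ℕ) % 2 ^ m, Nat.mod_lt _ (pow_pos (by norm_num) m)⟩

/-- `IsPauliString n M` holds iff `M` is a Kronecker product of `n` single-qubit
Pauli matrices. -/
def IsPauliString : (n : ℕ) → Matrix (Fin (2 ^ n)) (Fin (2 ^ n)) ℂ → Prop
  | 0, M => M = 1
  | n + 1, M => ∃ Q ∈ ({pauliI, pauliX, pauliY, pauliZ} : Set (Matrix (Fin 2) (Fin 2) ℂ)),
      ∃ B, IsPauliString n B ∧ M = kron Q B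

/-- An `n`-qubit Pauli LIM: a nonzero scalar multiple of an `n`-qubit Pauli string. -/
def IsPauliLIM (n : ℕ) (A : Matrix (Fin (2 ^ n)) (Fin (2 ^ n)) ℂ) : Prop :=
  ∃ (c : ℂ) (P : Matrix (Fin (2 ^ n)) (Fin (2 ^ n)) ℂ),
    c ≠ 0 ∧ IsPauliString n P ∧ A = c • P

/-- The stabilizer set of a vector: all `n`-qubit Pauli LIMs fixing `φ`. -/
def PauliStab {n : ℕ} (φ : Fin (2 ^ n) → ℂ) : Set (Matrix (Fin (2 ^ n)) (Fin (2 ^ n)) ℂ) :=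
  {A | IsPauliLIM n A ∧ A.mulVec φ = φ}

/-- Two vectors are Pauli-isomorphic if some Pauli LIM maps one to the other. -/
def PauliIso {n : ℕ} (φ ψ : Fin (2 ^ n) → ℂ) : Prop :=
  ∃ A, IsPauliLIM n A ∧ A.mulVec φ = ψ

/-- Membership in the `n`-qubit Pauli group: `i^k · P` with `P` a Pauli string. -/
def InPauliGroup (n : ℕ) (A : Matrix (Fin (2 ^ n)) (Fin (2 ^ n)) ℂ) : Prop :=
  ∃ (k : Fin 4) (P : Matrix (Fin (2 ^ n)) (Fin (2 ^ n)) ℂ),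
    IsPauliString n P ∧ A = (Complex.I ^ (k : ℕ)) • P

/-- The vector `|0⟩⊗φ₀ + |1⟩⊗φ₁`: first `2^m` coordinates are `φ₀`, last are `φ₁`. -/
def dirac {m : ℕ} (φ₀ φ₁ : Fin (2 ^ m) → ℂ) : Fin (2 ^ (m + 1)) → ℂ := fun i =>
  if h : (i : ℕ) < 2 ^ m then φ₀ ⟨i, h⟩
  else φ₁ ⟨(i : ℕ) - 2 ^ m, by
    have h1 := i.isLt
    have h2 : (2 : ℕ) ^ (m + 1) = 2 ^ m + 2 ^ m := by rw [pow_succ]; omega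
    omega⟩

/-- An `n`-qubit stabilizer state: a unit vector stabilized by exactly `2^n`
elements of the Pauli group. -/
def IsStabilizerState (n : ℕ) (φ : Fin (2 ^ n) → ℂ) : Prop :=
  (∑ i, Complex.normSq (φ i)) = 1 ∧
    Set.ncard {A : Matrix (Fin (2 ^ n)) (Fin (2 ^ n)) ℂ |
      InPauliGroup n A ∧ A.mulVec φ = φ} = 2 ^ n

/-- The standard Hermitian inner product on `ℂ^N`. -/
def hinner {N : ℕ} (φ ψ : Fin N → ℂ) : ℂ :=
  ∑ i, (starRingEnd ℂ) (φ i) * ψ i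



/-- `Z^{a_m} ⊗ ⋯ ⊗ Z^{a_1}` (the `j`-th tensor factor is `Z` iff `a j = true`). -/
def zString : (m : ℕ) → (Fin m → Bool) → Matrix (Fin (2 ^ m)) (Fin (2 ^ m)) ℂ
  | 0, _ => 1
  | m + 1, a => kron (if a (Fin.last m) then pauliZ else 1) (zString m (fun j => a j.castSucc))

open Classical in
/-- Number of edges of `G` with both endpoints in the set of vertices
`j` with `x.testBit j = true`. -/
def edgeCount {n : ℕ} (G : SimpleGraph (Fin n)) (x : ℕ) : ℕ :=
  (Finset.univ.filter (fun p : Fin n × Fin n =>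
    p.1 < p.2 ∧ G.Adj p.1 p.2 ∧ x.testBit p.1.val = true ∧ x.testBit p.2.val = true)).card

/-- The graph state of a simple graph on vertices `{0, …, n-1}`; vertex `j`
corresponds to the `j`-th bit of the basis-state index. -/
def graphState {n : ℕ} (G : SimpleGraph (Fin n)) : Fin (2 ^ n) → ℂ :=
  fun x => (-1 : ℂ) ^ edgeCount G (x : ℕ) / Real.sqrt (2 ^ n)

/-- The subfunction of `f` of order `ℓ` obtained by fixing the first `ℓ`
arguments to `a`. -/
def subfun {N : ℕ} (f : (Fin N → Bool) → ℂ) (ℓ : ℕ) (a : Fin ℓ → Bool) :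
    (Fin (N - ℓ) → Bool) → ℂ := fun x =>
  f (fun i => if h : (i : ℕ) < ℓ then a ⟨i, h⟩
      else x ⟨(i : ℕ) - ℓ, by have := i.isLt; omega⟩)

/-- A strong matching: a set of pairwise vertex-disjoint edges of `G` such that
every edge of `G` with both endpoints among the matched vertices is in `M`. -/
def IsStrongMatching {V : Type*} (G : SimpleGraph V) (M : Set (Sym2 V)) : Prop :=
  M ⊆ G.edgeSet ∧
  (∀ e₁ ∈ M, ∀ e₂ ∈ M, e₁ ≠ e₂ → ∀ v, v ∈ e₁ → v ∉ e₂) ∧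
  (∀ e ∈ G.edgeSet, (∀ v ∈ e, ∃ e' ∈ M, v ∈ e') → e ∈ M)

/-- An `(S,T)`-strong matching: a strong matching each of whose edges has one
endpoint in `S` and the other in `T`. -/
def IsSTStrongMatching {V : Type*} (G : SimpleGraph V) (S T : Set V) (M : Set (Sym2 V)) : Prop :=
  IsStrongMatching G M ∧ ∀ e ∈ M, ∃ u ∈ S, ∃ w ∈ T, e = s(u, w)

/-- The `n × n` grid graph. -/
def gridGraph (n : ℕ) : SimpleGraph (Fin n × Fin n) :=
  SimpleGraph.fromRel (fun u v =>
    (u.1 = v.1 ∧ (u.2 : ℕ) + 1 = (v.2 : ℕ)) ∨ (u.2 = v.2 ∧ (u.1 : ℕ) + 1 = (v.1 : ℕ)))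

/-- The amplitude function of the graph state of `G`, on assignments `V → Bool`. -/
def ampGraphState {V : Type*} [Fintype V] (G : SimpleGraph V) (x : V → Bool) : ℂ :=
  (-1 : ℂ) ^ Set.ncard {e ∈ G.edgeSet | ∀ v ∈ e, x v = true} / Real.sqrt (2 ^ Fintype.card V)

open Classical in
/-- The coset state of `C ⊆ {0,…,2^n − 1}`: the uniform superposition over `C`. -/
def cosetState (n : ℕ) (C : Set ℕ) : Fin (2 ^ n) → ℂ :=
  fun x => if (x : ℕ) ∈ C then 1 / Real.sqrt (C.ncard) else 0


/-- `X^{a_m} ⊗ ⋯ ⊗ X^{a_1}` (the `j`-th tensor factor is `X` iff `a j = true`). -/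
def xString : (m : ℕ) → (Fin m → Bool) → Matrix (Fin (2 ^ m)) (Fin (2 ^ m)) ℂ
  | 0, _ => 1
  | m + 1, a => kron (if a (Fin.last m) then pauliX else 1) (xString m (fun j => a j.castSucc))

def dirEquiv (m : ℕ) : Fin 2 × Fin (2 ^ m) ≃ Fin (2 ^ (m + 1)) :=
  finProdFinEquiv.trans (finCongr (by rw [pow_succ, mul_comm]))

lemma dirEquiv_val (m : ℕ) (a : Fin 2) (i : Fin (2 ^ m)) :
    ((dirEquiv m (a, i) : Fin (2 ^ (m + 1))) : ℕ) = i + 2 ^ m * a := by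
  simp [dirEquiv, finProdFinEquiv]

lemma kron_apply_e {m : ℕ} (A : Matrix (Fin 2) (Fin 2) ℂ) (B : Matrix (Fin (2 ^ m)) (Fin (2 ^ m)) ℂ)
    (a b : Fin 2) (i j : Fin (2 ^ m)) :
    kron A B (dirEquiv m (a, i)) (dirEquiv m (b, j)) = A a b * B i j := by
  have key : ∀ (a : Fin 2) (i : Fin (2 ^ m)),
      (if ((dirEquiv m (a, i) : Fin (2 ^ (m + 1))) : ℕ) < 2 ^ m then (0 : Fin 2) else 1) = a := by
    intro a i
    rw [dirEquiv_val]
    have := i.isLt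
    fin_cases a <;> simp
  have key2 : ∀ (a : Fin 2) (i : Fin (2 ^ m)),
      (⟨((dirEquiv m (a, i) : Fin (2 ^ (m + 1))) : ℕ) % 2 ^ m,
        Nat.mod_lt _ (pow_pos (by norm_num) m)⟩ : Fin (2 ^ m)) = i := by
    intro a i
    ext
    simp only [dirEquiv_val, Nat.add_mul_mod_self_left]
    exact Nat.mod_eq_of_lt i.isLt
  unfold kron
  rw [key, key, key2, key2]

lemma kron_eq {m : ℕ} (A : Matrix (Fin 2) (Fin 2) ℂ) (B : Matrix (Fin (2 ^ m)) (Fin (2 ^ m)) ℂ) :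
    kron A B = (Matrix.kroneckerMap (· * ·) A B).submatrix (dirEquiv m).symm (dirEquiv m).symm := by
  ext i j
  obtain ⟨⟨a, i⟩, rfl⟩ := (dirEquiv m).surjective i
  obtain ⟨⟨b, j⟩, rfl⟩ := (dirEquiv m).surjective j
  rw [kron_apply_e]; simp

lemma kron_mul {m : ℕ} (A C : Matrix (Fin 2) (Fin 2) ℂ) (B D : Matrix (Fin (2 ^ m)) (Fin (2 ^ m)) ℂ) :
    kron A B * kron C D = kron (A * C) (B * D) := by
  simp only [kron_eq, Matrix.submatrix_mul_equiv]
  rw [Matrix.mul_kronecker_mul]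

lemma kron_one {m : ℕ} : kron (m := m) 1 1 = 1 := by
  rw [kron_eq]
  have := Matrix.one_kronecker_one (α := ℂ) (m := Fin 2) (n := Fin (2 ^ m))
  rw [this]; simp

lemma kron_ct {m : ℕ} (A : Matrix (Fin 2) (Fin 2) ℂ) (B : Matrix (Fin (2 ^ m)) (Fin (2 ^ m)) ℂ) :
    (kron A B)ᴴ = kron Aᴴ Bᴴ := by
  rw [kron_eq, kron_eq, Matrix.conjTranspose_submatrix]
  congr 1
  exact Matrix.conjTranspose_kronecker A B

lemma kron_smul {m : ℕ} (c : ℂ) (A : Matrix (Fin 2) (Fin 2) ℂ)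
    (B : Matrix (Fin (2 ^ m)) (Fin (2 ^ m)) ℂ) : c • kron A B = kron A (c • B) := by
  ext i j; simp [kron]; ring

lemma kron_smul' {m : ℕ} (c : ℂ) (A : Matrix (Fin 2) (Fin 2) ℂ)
    (B : Matrix (Fin (2 ^ m)) (Fin (2 ^ m)) ℂ) : kron (c • A) B = kron A (c • B) := by
  ext i j; simp [kron]; ring

lemma dirac_e0 {m : ℕ} (a b : Fin (2 ^ m) → ℂ) (i : Fin (2 ^ m)) :
    dirac a b (dirEquiv m (0, i)) = a i := by
  have h : ((dirEquiv m (0, i) : Fin (2 ^ (m + 1))) : ℕ) = i := by simp [dirEquiv_val]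
  simp [dirac, h]

lemma dirac_e1 {m : ℕ} (a b : Fin (2 ^ m) → ℂ) (i : Fin (2 ^ m)) :
    dirac a b (dirEquiv m (1, i)) = b i := by
  have h : ((dirEquiv m (1, i) : Fin (2 ^ (m + 1))) : ℕ) = i + 2 ^ m := by simp [dirEquiv_val]
  simp [dirac, h]

lemma sum_e {m : ℕ} {α : Type*} [AddCommMonoid α] (f : Fin (2 ^ (m + 1)) → α) :
    ∑ i, f i = ∑ i, f (dirEquiv m (0, i)) + ∑ i, f (dirEquiv m (1, i)) := by
  rw [← (dirEquiv m).sum_comp, Fintype.sum_prod_type, Fin.sum_univ_two]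

lemma dirac_ext {m : ℕ} {a b : Fin (2 ^ m) → ℂ} {v : Fin (2 ^ (m + 1)) → ℂ}
    (h0 : ∀ i, v (dirEquiv m (0, i)) = a i) (h1 : ∀ i, v (dirEquiv m (1, i)) = b i) :
    v = dirac a b := by
  ext i
  obtain ⟨⟨c, i⟩, rfl⟩ := (dirEquiv m).surjective i
  fin_cases c
  · exact (h0 i).trans (dirac_e0 a b i).symm
  · exact (h1 i).trans (dirac_e1 a b i).symm

lemma dirac_surj {m : ℕ} (v : Fin (2 ^ (m + 1)) → ℂ) : ∃ a b, v = dirac a b :=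
  ⟨_, _, dirac_ext (fun _ => rfl) (fun _ => rfl)⟩

lemma dirac_inj {m : ℕ} {a b c d : Fin (2 ^ m) → ℂ} : dirac a b = dirac c d ↔ a = c ∧ b = d := by
  constructor
  · intro h
    constructor
    · ext i; rw [← dirac_e0 a b i, h, dirac_e0]
    · ext i; rw [← dirac_e1 a b i, h, dirac_e1]
  · rintro ⟨rfl, rfl⟩; rfl

lemma kron_mulVec {m : ℕ} (A : Matrix (Fin 2) (Fin 2) ℂ) (B : Matrix (Fin (2 ^ m)) (Fin (2 ^ m)) ℂ)
    (a b : Fin (2 ^ m) → ℂ) :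
    (kron A B).mulVec (dirac a b) = dirac (A 0 0 • B.mulVec a + A 0 1 • B.mulVec b)
      (A 1 0 • B.mulVec a + A 1 1 • B.mulVec b) := by
  apply dirac_ext <;> intro i <;>
  simp [Matrix.mulVec, dotProduct, sum_e, kron_apply_e, dirac_e0, dirac_e1, Finset.mul_sum, mul_assoc]

lemma PG_I {n : ℕ} {A : Matrix (Fin (2 ^ n)) (Fin (2 ^ n)) ℂ} (h : InPauliGroup n A) (j : ℕ) :
    InPauliGroup n (Complex.I ^ j • A) := by
  obtain ⟨k, P, hP, rfl⟩ := h
  refine ⟨⟨(j + k) % 4, Nat.mod_lt _ (by norm_num)⟩, P, hP, ?_⟩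
  rw [smul_smul, ← pow_add]
  congr 1
  exact Complex.I_pow_eq_pow_mod _

lemma PG_s {n : ℕ} {A : Matrix (Fin (2 ^ n)) (Fin (2 ^ n)) ℂ} (h : InPauliGroup n A) {s : ℂ}
    (hs : s = 1 ∨ s = -1) : InPauliGroup n (s • A) := by
  rcases hs with rfl | rfl
  · simpa using h
  · have := PG_I h 2
    rwa [Complex.I_sq] at this

lemma PG_zero {A : Matrix (Fin (2 ^ 0)) (Fin (2 ^ 0)) ℂ} (h : InPauliGroup 0 A) :
    ∃ k : ℕ, A = Complex.I ^ k • (1 : Matrix (Fin (2 ^ 0)) (Fin (2 ^ 0)) ℂ) := by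
  obtain ⟨k, P, hP, rfl⟩ := h
  exact ⟨k, by rw [show P = 1 from hP]⟩

def dg (s : ℂ) : Matrix (Fin 2) (Fin 2) ℂ := !![1, 0; 0, s]
def ad (s : ℂ) : Matrix (Fin 2) (Fin 2) ℂ := !![0, s; 1, 0]

lemma PG_succ {n : ℕ} {A : Matrix (Fin (2 ^ (n + 1))) (Fin (2 ^ (n + 1))) ℂ} :
    InPauliGroup (n + 1) A ↔ ∃ B, InPauliGroup n B ∧ ∃ s : ℂ, (s = 1 ∨ s = -1) ∧
      (A = kron (dg s) B ∨ A = kron (ad s) B) := by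
  have hY : pauliY = Complex.I • ad (-1) := by
    ext i j; fin_cases i <;> fin_cases j <;> simp [pauliY, ad]
  have hY' : ad (-1) = (Complex.I ^ 3) • pauliY := by
    rw [hY, smul_smul, ← pow_succ, Complex.I_pow_four, one_smul]
  have h1 : pauliI = dg 1 := by
    ext i j; fin_cases i <;> fin_cases j <;> simp [pauliI, dg]
  have hX : pauliX = ad 1 := rfl
  have hZ : pauliZ = dg (-1) := rfl
  constructor
  · rintro ⟨k, P, ⟨Q, hQ, B, hB, rfl⟩, rfl⟩
    have hPB : InPauliGroup n (Complex.I ^ (k : ℕ) • B) := ⟨k, B, hB, rfl⟩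
    simp only [Set.mem_insert_iff, Set.mem_singleton_iff] at hQ
    rcases hQ with rfl | rfl | rfl | rfl
    · exact ⟨_, hPB, 1, Or.inl rfl, Or.inl (by rw [kron_smul, h1])⟩
    · exact ⟨_, hPB, 1, Or.inl rfl, Or.inr (by rw [kron_smul, hX])⟩
    · exact ⟨_, PG_I hPB 1, -1, Or.inr rfl, Or.inr (by rw [kron_smul, hY, kron_smul', pow_one])⟩
    · exact ⟨_, hPB, -1, Or.inr rfl, Or.inl (by rw [kron_smul, hZ])⟩
  · rintro ⟨_, ⟨k, B, hB, rfl⟩, s, rfl | rfl, rfl | rfl⟩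
    · exact ⟨k, _, ⟨pauliI, by simp, B, hB, rfl⟩, by rw [kron_smul, h1]⟩
    · exact ⟨k, _, ⟨pauliX, by simp, B, hB, rfl⟩, by rw [kron_smul, hX]⟩
    · exact ⟨k, _, ⟨pauliZ, by simp, B, hB, rfl⟩, by rw [kron_smul, hZ]⟩
    · rw [hY', kron_smul', ← kron_smul, ← kron_smul]
      apply PG_I
      exact ⟨k, _, ⟨pauliY, by simp, B, hB, rfl⟩, rfl⟩

lemma sgn_mul {s t : ℂ} (hs : s = 1 ∨ s = -1) (ht : t = 1 ∨ t = -1) : s * t = 1 ∨ s * t = -1 := by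
  rcases hs with rfl | rfl <;> rcases ht with rfl | rfl <;> simp

lemma dg_dg (s t : ℂ) : dg s * dg t = dg (s * t) := by
  ext i j; fin_cases i <;> fin_cases j <;> simp [dg, Matrix.mul_apply, Fin.sum_univ_two]
lemma ad_dg (s t : ℂ) : ad s * dg t = ad (s * t) := by
  ext i j; fin_cases i <;> fin_cases j <;> simp [dg, ad, Matrix.mul_apply, Fin.sum_univ_two]
lemma dg_ad {s : ℂ} (hs : s = 1 ∨ s = -1) (t : ℂ) : dg s * ad t = s • ad (s * t) := by
  rcases hs with rfl | rfl <;> ext i j <;> fin_cases i <;> fin_cases j <;>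
    simp [dg, ad, Matrix.mul_apply, Fin.sum_univ_two]
lemma ad_ad {s : ℂ} (hs : s = 1 ∨ s = -1) (t : ℂ) : ad s * ad t = s • dg (s * t) := by
  rcases hs with rfl | rfl <;> ext i j <;> fin_cases i <;> fin_cases j <;>
    simp [dg, ad, Matrix.mul_apply, Fin.sum_univ_two]

lemma PG_mul : ∀ {n : ℕ} {A B : Matrix (Fin (2 ^ n)) (Fin (2 ^ n)) ℂ}, InPauliGroup n A →
    InPauliGroup n B → InPauliGroup n (A * B)
  | 0, A, B, hA, hB => by
    obtain ⟨k, rfl⟩ := PG_zero hA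
    rw [Matrix.smul_mul, one_mul]
    exact PG_I hB k
  | n + 1, A, B, hA, hB => by
    obtain ⟨C, hC, s, hs, hA⟩ := PG_succ.1 hA
    obtain ⟨D, hD, t, ht, hB⟩ := PG_succ.1 hB
    have hCD := PG_mul hC hD
    apply PG_succ.2
    rcases hA with rfl | rfl <;> rcases hB with rfl | rfl <;> rw [kron_mul]
    · exact ⟨_, hCD, _, sgn_mul hs ht, Or.inl (by rw [dg_dg])⟩
    · exact ⟨_, PG_s hCD hs, _, sgn_mul hs ht, Or.inr (by rw [dg_ad hs, kron_smul'])⟩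
    · exact ⟨_, hCD, _, sgn_mul hs ht, Or.inr (by rw [ad_dg])⟩
    · exact ⟨_, PG_s hCD hs, _, sgn_mul hs ht, Or.inl (by rw [ad_ad hs, kron_smul'])⟩

lemma PG_unitary : ∀ {n : ℕ} {A : Matrix (Fin (2 ^ n)) (Fin (2 ^ n)) ℂ}, InPauliGroup n A →
    Aᴴ * A = 1
  | 0, A, hA => by
    obtain ⟨k, rfl⟩ := PG_zero hA
    rw [Matrix.conjTranspose_smul, Matrix.smul_mul, Matrix.mul_smul, smul_smul,
      Matrix.conjTranspose_one, one_mul]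
    simp [← mul_pow]
  | n + 1, A, hA => by
    obtain ⟨C, hC, s, hs, hA⟩ := PG_succ.1 hA
    have := PG_unitary hC
    have h1 : (dg s)ᴴ * dg s = 1 := by
      rcases hs with rfl | rfl <;> ext i j <;> fin_cases i <;> fin_cases j <;>
        simp [dg, Matrix.mul_apply, Fin.sum_univ_two]
    have h2 : (ad s)ᴴ * ad s = 1 := by
      rcases hs with rfl | rfl <;> ext i j <;> fin_cases i <;> fin_cases j <;>
        simp [ad, Matrix.mul_apply, Fin.sum_univ_two]
    rcases hA with rfl | rfl
    · rw [kron_ct, kron_mul, this, h1, kron_one]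
    · rw [kron_ct, kron_mul, this, h2, kron_one]

lemma PG_mulVec_zero {n : ℕ} {A : Matrix (Fin (2 ^ n)) (Fin (2 ^ n)) ℂ} (hA : InPauliGroup n A)
    {v : Fin (2 ^ n) → ℂ} (h : A.mulVec v = 0) : v = 0 := by
  rw [← Matrix.one_mulVec v, ← PG_unitary hA, ← Matrix.mulVec_mulVec, h, Matrix.mulVec_zero]

lemma PG_norm {n : ℕ} {A : Matrix (Fin (2 ^ n)) (Fin (2 ^ n)) ℂ} (hA : InPauliGroup n A)
    (v : Fin (2 ^ n) → ℂ) :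
    ∑ i, Complex.normSq (A.mulVec v i) = ∑ i, Complex.normSq (v i) := by
  have h : ∀ w : Fin (2 ^ n) → ℂ, ((∑ i, Complex.normSq (w i) : ℝ) : ℂ) = star w ⬝ᵥ w := by
    intro w
    simp [dotProduct, Complex.normSq_eq_conj_mul_self]
  have h2 : star (A.mulVec v) ⬝ᵥ A.mulVec v = star v ⬝ᵥ v := by
    rw [Matrix.star_mulVec, ← Matrix.dotProduct_mulVec, Matrix.mulVec_mulVec, PG_unitary hA,
      Matrix.one_mulVec]
  rw [← h, ← h] at h2
  exact_mod_cast h2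

lemma PG_finite : ∀ n : ℕ, {A | InPauliGroup n A}.Finite
  | 0 => by
    have : {A | InPauliGroup 0 A} ⊆ Set.range (fun k : Fin 4 =>
        Complex.I ^ (k : ℕ) • (1 : Matrix (Fin (2 ^ 0)) (Fin (2 ^ 0)) ℂ)) := by
      rintro _ ⟨k, P, hP, rfl⟩
      exact ⟨k, by rw [show P = 1 from hP]⟩
    exact (Set.finite_range _).subset this
  | n + 1 => by
    have ih := PG_finite n
    have hf : ((fun p : Matrix (Fin 2) (Fin 2) ℂ × Matrix (Fin (2 ^ n)) (Fin (2 ^ n)) ℂ =>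
      kron p.1 p.2) '' (({dg 1, dg (-1), ad 1, ad (-1)} : Set _) ×ˢ {A | InPauliGroup n A})).Finite :=
      ((Set.toFinite _).prod ih).image _
    apply hf.subset
    intro A hA
    obtain ⟨C, hC, s, hs, hA⟩ := PG_succ.1 hA
    rcases hs with rfl | rfl <;> rcases hA with rfl | rfl
    · exact ⟨(dg 1, C), ⟨by simp, hC⟩, rfl⟩
    · exact ⟨(ad 1, C), ⟨by simp, hC⟩, rfl⟩
    · exact ⟨(dg (-1), C), ⟨by simp, hC⟩, rfl⟩
    · exact ⟨(ad (-1), C), ⟨by simp, hC⟩, rfl⟩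

def stb (n : ℕ) (v : Fin (2 ^ n) → ℂ) : Set (Matrix (Fin (2 ^ n)) (Fin (2 ^ n)) ℂ) :=
  {A | InPauliGroup n A ∧ A.mulVec v = v}

lemma stb_finite (n : ℕ) (v : Fin (2 ^ n) → ℂ) : (stb n v).Finite :=
  (PG_finite n).subset fun _ h => h.1

/-- diagonal part with sign `s` -/
def stD (n : ℕ) (v : Fin (2 ^ (n + 1)) → ℂ) : Set (Matrix (Fin (2 ^ (n + 1))) (Fin (2 ^ (n + 1))) ℂ) :=
  {A | A ∈ stb (n + 1) v ∧ ∃ B, InPauliGroup n B ∧ ∃ s : ℂ, (s = 1 ∨ s = -1) ∧ A = kron (dg s) B}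

def stK (n : ℕ) (v : Fin (2 ^ (n + 1)) → ℂ) : Set (Matrix (Fin (2 ^ (n + 1))) (Fin (2 ^ (n + 1))) ℂ) :=
  {A | A ∈ stb (n + 1) v ∧ ∃ B, InPauliGroup n B ∧ ∃ s : ℂ, (s = 1 ∨ s = -1) ∧ A = kron (ad s) B}

lemma stb_eq (n : ℕ) (v : Fin (2 ^ (n + 1)) → ℂ) : stb (n + 1) v = stD n v ∪ stK n v := by
  ext A
  constructor
  · intro h
    obtain ⟨C, hC, s, hs, hA⟩ := PG_succ.1 h.1
    rcases hA with hA | hA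
    · exact Or.inl ⟨h, C, hC, s, hs, hA⟩
    · exact Or.inr ⟨h, C, hC, s, hs, hA⟩
  · rintro (h | h) <;> exact h.1

lemma stD_finite (n : ℕ) (v : Fin (2 ^ (n + 1)) → ℂ) : (stD n v).Finite :=
  (stb_finite _ v).subset fun _ h => h.1

lemma stK_card (n : ℕ) (v : Fin (2 ^ (n + 1)) → ℂ) : (stK n v).ncard ≤ (stD n v).ncard := by
  rcases (stK n v).eq_empty_or_nonempty with h | ⟨g, hg⟩
  · simp [h]
  · apply Set.ncard_le_ncard_of_injOn (fun A => g * A) _ _ (stD_finite n v)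
    · rintro A hA
      obtain ⟨⟨hg1, hg2⟩, C, hC, s, hs, rfl⟩ := hg
      obtain ⟨⟨hA1, hA2⟩, D, hD, t, ht, rfl⟩ := hA
      refine ⟨⟨PG_mul hg1 hA1, ?_⟩, _, PG_s (PG_mul hC hD) hs, _, sgn_mul hs ht, ?_⟩
      · rw [← Matrix.mulVec_mulVec, hA2, hg2]
      · rw [kron_mul, ad_ad hs, kron_smul']
    · intro A _ B _ h
      simp only at h
      rw [← one_mul A, ← one_mul B, ← PG_unitary hg.1.1, mul_assoc, mul_assoc, h]

lemma kron_dg_mem {n : ℕ} {B : Matrix (Fin (2 ^ n)) (Fin (2 ^ n)) ℂ} {s : ℂ}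
    {a b : Fin (2 ^ n) → ℂ}
    (h : (kron (dg s) B).mulVec (dirac a b) = dirac a b) : B.mulVec a = a ∧ s • B.mulVec b = b := by
  rw [kron_mulVec, dirac_inj] at h
  simpa [dg] using h

lemma kron_ad_mem {n : ℕ} {B : Matrix (Fin (2 ^ n)) (Fin (2 ^ n)) ℂ} {s : ℂ}
    {a b : Fin (2 ^ n) → ℂ}
    (h : (kron (ad s) B).mulVec (dirac a b) = dirac a b) : s • B.mulVec b = a ∧ B.mulVec a = b := by
  rw [kron_mulVec, dirac_inj] at h
  simpa [ad] using h

def blk {n : ℕ} (c : Fin 2) (A : Matrix (Fin (2 ^ (n + 1))) (Fin (2 ^ (n + 1))) ℂ) :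
    Matrix (Fin (2 ^ n)) (Fin (2 ^ n)) ℂ := fun i j => A (dirEquiv n (c, i)) (dirEquiv n (c, j))

lemma blk0 {n : ℕ} (s : ℂ) (B : Matrix (Fin (2 ^ n)) (Fin (2 ^ n)) ℂ) :
    blk 0 (kron (dg s) B) = B := by
  ext i j; simp [blk, kron_apply_e, dg]

lemma blk1 {n : ℕ} (s : ℂ) (B : Matrix (Fin (2 ^ n)) (Fin (2 ^ n)) ℂ) :
    blk 1 (kron (dg s) B) = s • B := by
  ext i j; simp [blk, kron_apply_e, dg]

lemma stD_card {n : ℕ} {a b : Fin (2 ^ n) → ℂ} (hb : b ≠ 0) :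
    (stD n (dirac a b)).ncard ≤ (stb n a).ncard := by
  apply Set.ncard_le_ncard_of_injOn (blk 0) _ _ (stb_finite n a)
  · rintro _ ⟨⟨_, h⟩, B, hB, s, hs, rfl⟩
    rw [blk0]
    exact ⟨hB, (kron_dg_mem h).1⟩
  · rintro _ ⟨⟨_, h⟩, B, hB, s, hs, rfl⟩ _ ⟨⟨_, h'⟩, B', hB', s', hs', rfl⟩ he
    rw [blk0, blk0] at he
    subst he
    have e1 := (kron_dg_mem h).2
    have e2 := (kron_dg_mem h').2
    have e3 : (s - s') • B.mulVec b = 0 := by rw [sub_smul, e1, e2, sub_self]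
    rcases smul_eq_zero.1 e3 with e | e
    · rw [sub_eq_zero.1 e]
    · exact absurd (PG_mulVec_zero hB e) hb

lemma stD_card2 {n : ℕ} {a b c : Fin (2 ^ n) → ℂ} (hc : c = a ∨ c = b) :
    (stD n (dirac a b)).ncard ≤ 2 * (stb n c).ncard := by
  set T : ℂ → Set (Matrix (Fin (2 ^ (n + 1))) (Fin (2 ^ (n + 1))) ℂ) := fun s =>
    {A | A ∈ stb (n + 1) (dirac a b) ∧ ∃ B, InPauliGroup n B ∧ A = kron (dg s) B} with hT
  have hTc : ∀ s, (s = 1 ∨ s = -1) → (T s).ncard ≤ (stb n c).ncard := by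
    intro s hs
    have hs0 : s ≠ 0 := by rcases hs with rfl | rfl <;> simp
    rcases hc with rfl | rfl
    · apply Set.ncard_le_ncard_of_injOn (blk 0) _ _ (stb_finite n _)
      · rintro _ ⟨⟨_, h⟩, B, hB, rfl⟩
        rw [blk0]
        exact ⟨hB, (kron_dg_mem h).1⟩
      · rintro _ ⟨⟨_, h⟩, B, hB, rfl⟩ _ ⟨⟨_, h'⟩, B', hB', rfl⟩ he
        rw [blk0, blk0] at he
        rw [he]
    · apply Set.ncard_le_ncard_of_injOn (blk 1) _ _ (stb_finite n _)
      · rintro _ ⟨⟨_, h⟩, B, hB, rfl⟩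
        rw [blk1]
        exact ⟨PG_s hB hs, by rw [Matrix.smul_mulVec]; exact (kron_dg_mem h).2⟩
      · rintro _ ⟨⟨_, h⟩, B, hB, rfl⟩ _ ⟨⟨_, h'⟩, B', hB', rfl⟩ he
        rw [blk1, blk1] at he
        rw [smul_right_injective _ hs0 he]
  have hsub : stD n (dirac a b) ⊆ T 1 ∪ T (-1) := by
    rintro A ⟨h, B, hB, s, rfl | rfl, hA⟩
    · exact Or.inl ⟨h, B, hB, hA⟩
    · exact Or.inr ⟨h, B, hB, hA⟩
  have hfin : (T 1 ∪ T (-1)).Finite := by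
    apply (stb_finite (n + 1) (dirac a b)).subset
    rintro A (h | h) <;> exact h.1
  have h1 := Set.ncard_le_ncard hsub hfin
  have h2 := Set.ncard_union_le (T 1) (T (-1))
  have h3 := hTc 1 (Or.inl rfl)
  have h4 := hTc (-1) (Or.inr rfl)
  omega

lemma stb_card : ∀ {n : ℕ} {v : Fin (2 ^ n) → ℂ}, v ≠ 0 → (stb n v).ncard ≤ 2 ^ n
  | 0, v, hv => by
    have : stb 0 v ⊆ {1} := by
      rintro A ⟨hA, h⟩
      obtain ⟨k, rfl⟩ := PG_zero hA
      rw [Matrix.smul_mulVec, Matrix.one_mulVec] at h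
      have h' : (Complex.I ^ k - 1) • v = 0 := by rw [sub_smul, h, one_smul, sub_self]
      rcases smul_eq_zero.1 h' with e | e
      · rw [Set.mem_singleton_iff, sub_eq_zero.1 e, one_smul]
      · exact absurd e hv
    have := Set.ncard_le_ncard this (Set.finite_singleton _)
    simpa using this
  | n + 1, v, hv => by
    obtain ⟨a, b, rfl⟩ := dirac_surj v
    have hU := Set.ncard_union_le (stD n (dirac a b)) (stK n (dirac a b))
    rw [← stb_eq] at hU
    have hK := stK_card n (dirac a b)
    by_cases hb : b = 0
    · have ha : a ≠ 0 := by
        rintro rfl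
        apply hv
        subst hb
        exact (dirac_ext (v := 0) (fun _ => rfl) (fun _ => rfl)).symm
      have hK0 : stK n (dirac a b) = ∅ := by
        ext A
        simp only [Set.mem_empty_iff_false, iff_false]
        rintro ⟨⟨_, h⟩, B, hB, s, hs, rfl⟩
        exact ha (PG_mulVec_zero hB ((kron_ad_mem h).2.trans hb))
      have h1 := stD_card2 (a := a) (b := b) (Or.inl rfl)
      have h2 := stb_card ha
      rw [hK0, Set.ncard_empty] at hU
      have hp := pow_succ 2 n; omega
    · by_cases ha : a = 0
      · have hK0 : stK n (dirac a b) = ∅ := by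
          ext A
          simp only [Set.mem_empty_iff_false, iff_false]
          rintro ⟨⟨_, h⟩, B, hB, s, hs, rfl⟩
          have := (kron_ad_mem h).2
          rw [ha, Matrix.mulVec_zero] at this
          exact hb this.symm
        have h1 := stD_card2 (a := a) (b := b) (Or.inr rfl)
        have h2 := stb_card hb
        rw [hK0, Set.ncard_empty] at hU
        have hp := pow_succ 2 n; omega
      · have h1 := stD_card (a := a) hb
        have h2 := stb_card ha
        have hp := pow_succ 2 n; omega

/-- The two halves of a stabilizer state are (normalized) stabilizer states and are
related by a Pauli LIM with scalar in `{1, −1, i, −i}`. Here `m` plays the role of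
`n − 1`, so the hypothesis `n ≥ 2` is `1 ≤ m`. -/
theorem stabilizer_state_halves (m : ℕ) (hm : 1 ≤ m)
    (φ : Fin (2 ^ (m + 1)) → ℂ) (hφ : IsStabilizerState (m + 1) φ)
    (φ₀ φ₁ : Fin (2 ^ m) → ℂ) (hsplit : φ = dirac φ₀ φ₁)
    (h₀ : φ₀ ≠ 0) (h₁ : φ₁ ≠ 0) :
    IsStabilizerState m ((Real.sqrt 2 : ℂ) • φ₀) ∧
      ∃ lam ∈ ({1, -1, Complex.I, -Complex.I} : Set ℂ),
        ∃ P : Matrix (Fin (2 ^ m)) (Fin (2 ^ m)) ℂ,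
          IsPauliString m P ∧ φ₁ = lam • P.mulVec φ₀ := by
  subst hsplit
  obtain ⟨hnorm, hcard⟩ := hφ
  change (stb (m + 1) (dirac φ₀ φ₁)).ncard = 2 ^ (m + 1) at hcard
  have hU := Set.ncard_union_le (stD m (dirac φ₀ φ₁)) (stK m (dirac φ₀ φ₁))
  rw [← stb_eq, hcard] at hU
  have hp := pow_succ 2 m
  have hK := stK_card m (dirac φ₀ φ₁)
  have hD := stD_card (a := φ₀) h₁
  have hS := stb_card h₀
  have hpos : 0 < 2 ^ m := pow_pos (by norm_num) m
  have hSe : (stb m φ₀).ncard = 2 ^ m := by omega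
  have hKne : (stK m (dirac φ₀ φ₁)).Nonempty := by
    rw [Set.nonempty_iff_ne_empty]
    intro h
    rw [h, Set.ncard_empty] at hU
    omega
  obtain ⟨_, ⟨_, h⟩, B, hB, s, hs, rfl⟩ := hKne
  have hφ₁ := (kron_ad_mem h).2
  have hs2 : (Real.sqrt 2 : ℂ) ≠ 0 := by
    simp
  refine ⟨⟨?_, ?_⟩, ?_⟩
  · have hN := PG_norm hB φ₀
    rw [hφ₁] at hN
    rw [sum_e] at hnorm
    simp only [dirac_e0, dirac_e1] at hnorm
    simp only [Pi.smul_apply, smul_eq_mul, Complex.normSq_mul, Complex.normSq_ofReal,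
      Real.mul_self_sqrt (zero_le_two), ← Finset.mul_sum]
    linarith
  · refine Eq.trans ?_ hSe
    congr 1
    ext A
    simp only [stb, Set.mem_setOf_eq, Matrix.mulVec_smul]
    rw [(smul_right_injective _ hs2).eq_iff]
  · obtain ⟨k, P, hP, rfl⟩ := hB
    refine ⟨Complex.I ^ (k : ℕ), ?_, P, hP, ?_⟩
    · fin_cases k <;> simp [pow_succ]
    · rw [← hφ₁, Matrix.smul_mulVec]

end
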